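/- Network invertibility (Invertibility Theorem): let W_0, …, W_N be m×m real matrices and b_0, …, b_N ∈ ℝ^m, and let A be the unbiased Lorentzian Goldilocks activation A(t) = t + t/(π(1+t²)). The Goldilocks network map F = L_N ∘ ⋯ ∘ L_0 : ℝ^m → ℝ^m, where L_n(x)_i = A((W_n x + b_n)_i), is a bijection of ℝ^m if and only if every W_n is invertible (has full rank). -/

import Mathlib

open Real

/-- The unbiased Lorentzian Goldilocks activation. -/
noncomputable def goldilocksA : ℝ → ℝ := fun t => t + t / (π * (1 + t ^ 2))

/-- The Goldilocks layer map `L(x)ᵢ = A((Wx + b)ᵢ)`. -/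
noncomputable def goldilocksLayer {m : ℕ} (W : Matrix (Fin m) (Fin m) ℝ)
    (b : Fin m → ℝ) (x : Fin m → ℝ) : Fin m → ℝ :=
  fun i => goldilocksA ((W.mulVec x + b) i)

/-- The Goldilocks network map `L_N ∘ ⋯ ∘ L_0` obtained by composing the layers with
weights `W 0, …, W N` and biases `b 0, …, b N`. -/
noncomputable def goldilocksNet {m : ℕ} (W : ℕ → Matrix (Fin m) (Fin m) ℝ)
    (b : ℕ → Fin m → ℝ) : ℕ → (Fin m → ℝ) → (Fin m → ℝ)
  | 0 => goldilocksLayer (W 0) (b 0)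
  | n + 1 => goldilocksLayer (W (n + 1)) (b (n + 1)) ∘ goldilocksNet W b n

/-!
The activation is a bijection of `ℝ`: it is strictly increasing because the slopes of the chords
of `t / (1 + t ^ 2)` are at least `-1 / 8` and `1 / 8 < π`, and it is onto because it is continuous
and stays within bounded distance of the identity. Hence a layer is surjective, or bijective,
exactly when its weight matrix is invertible. If the whole network is bijective, its last layer is
surjective, so bijective, and can be cancelled; the rest is induction on the depth.
-/

open Function
open scoped Matrix

lemma bijective_comp_iff_of_surjective_imp_bijective {α β γ : Type*} {f : α → β} {g : β → γ}
    (hg : Surjective g → Bijective g) :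
    Bijective (g ∘ f) ↔ Bijective f ∧ Bijective g := by
  refine ⟨fun hgf ↦ ?_, fun ⟨hf, hg⟩ ↦ hg.comp hf⟩
  have hg_bij : Bijective g := hg hgf.surjective.of_comp
  exact ⟨(Bijective.of_comp_iff' hg_bij f).1 hgf, hg_bij⟩

section Activation

lemma surjective_of_continuous_of_abs_sub_le {f : ℝ → ℝ} {C : ℝ} (hf : Continuous f)
    (hC : ∀ t, |f t - t| ≤ C) : Surjective f := by
  intro y
  have lower : f (y - C) ≤ y := by linarith [(abs_le.1 (hC (y - C))).2]
  have upper : y ≤ f (y + C) := by linarith [(abs_le.1 (hC (y + C))).1]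
  exact mem_range_of_exists_le_of_exists_ge hf ⟨_, lower⟩ ⟨_, upper⟩

lemma eight_mul_mul_sub_one_lt {x y : ℝ} (hxy : x ≠ y) :
    8 * (x * y - 1) < (1 + x ^ 2) * (1 + y ^ 2) := by
  have hsq : 0 < (x - y) ^ 2 := sq_pos_of_ne_zero (sub_ne_zero.2 hxy)
  calc 8 * (x * y - 1) < (x * y - 3) ^ 2 + (x - y) ^ 2 + 8 * (x * y - 1) := by
        linarith [sq_nonneg (x * y - 3)]
    _ = (1 + x ^ 2) * (1 + y ^ 2) := by ring

variable {c : ℝ}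

-- The constant `1 / 8` is sharp: `t / (1 + t ^ 2)` has derivative `-1 / 8` at `t = √3`.
lemma strictMono_add_div_mul_one_add_sq (hc : 1 / 8 ≤ c) :
    StrictMono fun t : ℝ ↦ t + t / (c * (1 + t ^ 2)) := by
  intro x y hxy
  have : 0 < c := by linarith
  have hden : 0 < c * ((1 + x ^ 2) * (1 + y ^ 2)) := by positivity
  have chord : (y + y / (c * (1 + y ^ 2))) - (x + x / (c * (1 + x ^ 2))) =
      (y - x) * (c * ((1 + x ^ 2) * (1 + y ^ 2)) - (x * y - 1)) /
        (c * ((1 + x ^ 2) * (1 + y ^ 2))) := by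
    field_simp
    ring
  have slope_pos : 0 < c * ((1 + x ^ 2) * (1 + y ^ 2)) - (x * y - 1) := by
    have hmul : 1 / 8 * ((1 + x ^ 2) * (1 + y ^ 2)) ≤ c * ((1 + x ^ 2) * (1 + y ^ 2)) := by
      gcongr
    linarith [eight_mul_mul_sub_one_lt hxy.ne]
  refine sub_pos.1 ?_
  rw [chord]
  exact div_pos (mul_pos (sub_pos.2 hxy) slope_pos) hden

lemma continuous_add_div_mul_one_add_sq (hc : c ≠ 0) :
    Continuous fun t : ℝ ↦ t + t / (c * (1 + t ^ 2)) :=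
  continuous_id.add (continuous_id.div (by fun_prop) fun t ↦ mul_ne_zero hc (by positivity))

lemma abs_div_mul_one_add_sq_le (hc : 0 < c) (t : ℝ) :
    |t / (c * (1 + t ^ 2))| ≤ 1 / (2 * c) := by
  have hden : 0 < c * (1 + t ^ 2) := by positivity
  have amgm : 2 * |t| ≤ 1 + t ^ 2 := by
    simpa using two_mul_le_add_sq 1 |t|
  rw [abs_div, abs_of_pos hden, div_le_div_iff₀ hden (by positivity)]
  calc |t| * (2 * c) = c * (2 * |t|) := by ring
    _ ≤ c * (1 + t ^ 2) := by gcongr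
    _ = 1 * (c * (1 + t ^ 2)) := (one_mul _).symm

lemma bijective_add_div_mul_one_add_sq (hc : 1 / 8 ≤ c) :
    Bijective fun t : ℝ ↦ t + t / (c * (1 + t ^ 2)) := by
  have hc_pos : 0 < c := by linarith
  refine ⟨(strictMono_add_div_mul_one_add_sq hc).injective,
    surjective_of_continuous_of_abs_sub_le (C := 1 / (2 * c))
      (continuous_add_div_mul_one_add_sq hc_pos.ne') fun t ↦ ?_⟩
  rw [add_sub_cancel_left]
  exact abs_div_mul_one_add_sq_le hc_pos t

lemma goldilocksA_bijective : Bijective goldilocksA :=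
  bijective_add_div_mul_one_add_sq (by linarith [pi_gt_three])

end Activation

section Layer

lemma bijective_piMap_comp_add {ι R S : Type*} [AddGroup R] {A : R → S} (hA : Bijective A)
    (b : ι → R) : Bijective (Pi.map fun i t ↦ A (t + b i)) :=
  Bijective.piMap fun i ↦ hA.comp (Equiv.addRight (b i)).bijective

variable {ι R S : Type*} [Fintype ι] [DecidableEq ι] [CommRing R]

lemma mulVec_bijective_iff_isUnit {W : Matrix ι ι R} : Bijective W.mulVec ↔ IsUnit W :=
  ⟨fun h ↦ Matrix.mulVec_surjective_iff_isUnit.1 h.surjective,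
    fun h ↦ ⟨Matrix.mulVec_injective_of_isUnit h, Matrix.mulVec_surjective_iff_isUnit.2 h⟩⟩

lemma surjective_activation_mulVec_add_iff_isUnit {A : R → S} (hA : Bijective A)
    (W : Matrix ι ι R) (b : ι → R) :
    Surjective (fun x i ↦ A ((W *ᵥ x + b) i)) ↔ IsUnit W :=
  (Surjective.of_comp_iff' (bijective_piMap_comp_add hA b) W.mulVec).trans
    Matrix.mulVec_surjective_iff_isUnit

lemma bijective_activation_mulVec_add_iff_isUnit {A : R → S} (hA : Bijective A)
    (W : Matrix ι ι R) (b : ι → R) :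
    Bijective (fun x i ↦ A ((W *ᵥ x + b) i)) ↔ IsUnit W :=
  (Bijective.of_comp_iff' (bijective_piMap_comp_add hA b) W.mulVec).trans
    mulVec_bijective_iff_isUnit

end Layer

section Network

variable {m : ℕ}

lemma goldilocksLayer_surjective_iff (W : Matrix (Fin m) (Fin m) ℝ) (b : Fin m → ℝ) :
    Surjective (goldilocksLayer W b) ↔ IsUnit W :=
  surjective_activation_mulVec_add_iff_isUnit goldilocksA_bijective W b

lemma goldilocksLayer_bijective_iff (W : Matrix (Fin m) (Fin m) ℝ) (b : Fin m → ℝ) :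
    Bijective (goldilocksLayer W b) ↔ IsUnit W :=
  bijective_activation_mulVec_add_iff_isUnit goldilocksA_bijective W b

lemma goldilocksNet_succ_bijective_iff (W : ℕ → Matrix (Fin m) (Fin m) ℝ) (b : ℕ → Fin m → ℝ)
    (n : ℕ) : Bijective (goldilocksNet W b (n + 1)) ↔
      Bijective (goldilocksNet W b n) ∧ IsUnit (W (n + 1)) := by
  rw [goldilocksNet, bijective_comp_iff_of_surjective_imp_bijective, goldilocksLayer_bijective_iff]
  rw [goldilocksLayer_surjective_iff, goldilocksLayer_bijective_iff]
  exact id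

end Network

/-- Invertibility theorem: the Goldilocks network map `F = L_N ∘ ⋯ ∘ L_0` is a
bijection of `ℝᵐ` if and only if every weight matrix `W n`, `n ≤ N`, is invertible. -/
theorem goldilocks_net_bijective_iff {m : ℕ} (N : ℕ)
    (W : ℕ → Matrix (Fin m) (Fin m) ℝ) (b : ℕ → Fin m → ℝ) :
    Function.Bijective (goldilocksNet W b N) ↔ ∀ n ≤ N, IsUnit (W n) := by
  induction N with
  | zero => simp only [goldilocksNet, goldilocksLayer_bijective_iff, Nat.le_zero, forall_eq]
  | succ N ih =>
    rw [goldilocksNet_succ_bijective_iff, ih]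
    simp only [← Nat.lt_succ_iff, Nat.forall_lt_succ_right (n := N + 1)]
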